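/- Let (Σ, g) be a 2-dimensional Riemannian manifold and K a transverse traceless symmetric 2-tensor. Then (1/2) Δ |K|_g² = |∇K|_g² + R |K|_g², where Δ is the Laplace–Beltrami operator and R the scalar curvature (Calabi–Simons identity). -/

import Mathlib

open scoped BigOperators
noncomputable section

/-- A point in a local coordinate chart of the 2-manifold Σ. -/
abbrev Pt := Fin 2 → ℝ

/-- A metric (or symmetric 2-tensor field) in local coordinates. -/
abbrev Ten2 := Pt → Matrix (Fin 2) (Fin 2) ℝ

/-- Partial derivative ∂_i f. -/
def pd (i : Fin 2) (f : Pt → ℝ) (x : Pt) : ℝ :=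
  fderiv ℝ f x (Pi.single i 1)

/-- Christoffel symbols Γ^k_{ij} of the Levi-Civita connection of `g`. -/
def christoffel (g : Ten2) (k i j : Fin 2) (x : Pt) : ℝ :=
  (1 / 2) * ∑ l, (g x)⁻¹ k l *
    (pd i (fun y => g y l j) x + pd j (fun y => g y l i) x - pd l (fun y => g y i j) x)

/-- Riemann curvature tensor R^a_{bcd}. -/
def riemUp (g : Ten2) (a b c d : Fin 2) (x : Pt) : ℝ :=
  pd c (fun y => christoffel g a d b y) x - pd d (fun y => christoffel g a c b y) x
    + ∑ e, christoffel g a c e x * christoffel g e d b x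
    - ∑ e, christoffel g a d e x * christoffel g e c b x

/-- Riemann curvature tensor with all indices lowered, R_{abcd}. -/
def riem (g : Ten2) (a b c d : Fin 2) (x : Pt) : ℝ :=
  ∑ e, g x a e * riemUp g e b c d x

/-- Ricci curvature Ric_{bd}. -/
def ric (g : Ten2) (b d : Fin 2) (x : Pt) : ℝ := ∑ a, riemUp g a b a d x

/-- Scalar curvature R. -/
def scal (g : Ten2) (x : Pt) : ℝ := ∑ b, ∑ d, (g x)⁻¹ b d * ric g b d x

/-- Covariant derivative ∇_c K_{ab} of a covariant 2-tensor `K` w.r.t. `g`. -/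
def covDeriv2 (g : Ten2) (K : Ten2) (c a b : Fin 2) (x : Pt) : ℝ :=
  pd c (fun y => K y a b) x - ∑ d, christoffel g d c a x * K x d b
    - ∑ d, christoffel g d c b x * K x a d

/-- Covariant derivative ∇_d T_{cab} of a covariant 3-tensor `T` w.r.t. `g`. -/
def covDeriv3 (g : Ten2) (T : Fin 2 → Fin 2 → Fin 2 → Pt → ℝ) (d c a b : Fin 2) (x : Pt) : ℝ :=
  pd d (T c a b) x - ∑ e, christoffel g e d c x * T e a b x
    - ∑ e, christoffel g e d a x * T c e b x
    - ∑ e, christoffel g e d b x * T c a e x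

/-- Laplace–Beltrami operator on scalar functions, Δ_g f = g^{ij}(∂_i∂_j f - Γ^k_{ij}∂_k f). -/
def lapScalar (g : Ten2) (f : Pt → ℝ) (x : Pt) : ℝ :=
  ∑ i, ∑ j, (g x)⁻¹ i j * (pd i (pd j f) x - ∑ k, christoffel g k i j x * pd k f x)

/-- Squared norm |K|_g² = K_{ab}K^{ab}. -/
def normSq2 (g : Ten2) (K : Ten2) (x : Pt) : ℝ :=
  ∑ a, ∑ b, ∑ c, ∑ d, (g x)⁻¹ a c * (g x)⁻¹ b d * K x a b * K x c d

/-- Squared norm |∇K|_g² = ∇_c K_{ab} ∇^c K^{ab}. -/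
def normSqCov (g : Ten2) (K : Ten2) (x : Pt) : ℝ :=
  ∑ e, ∑ f, ∑ a, ∑ b, ∑ c, ∑ d, (g x)⁻¹ e f * (g x)⁻¹ a c * (g x)⁻¹ b d *
    covDeriv2 g K e a b x * covDeriv2 g K f c d x

/-- Smoothness of a 2-tensor field in local coordinates. -/
def SmoothTen2 (g : Ten2) : Prop := ∀ i j, ContDiff ℝ (⊤ : ℕ∞) fun x => g x i j


/-- Smooth scalar functions. -/
def Sm (f : Pt → ℝ) : Prop := ContDiff ℝ (⊤ : ℕ∞) f

lemma Sm.diff {f : Pt → ℝ} (hf : Sm f) (x : Pt) : DifferentiableAt ℝ f x :=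
  (ContDiff.differentiable hf (by simp)) x

lemma Sm.add {f k : Pt → ℝ} (hf : Sm f) (hk : Sm k) : Sm (fun y => f y + k y) :=
  ContDiff.add hf hk

lemma Sm.sub {f k : Pt → ℝ} (hf : Sm f) (hk : Sm k) : Sm (fun y => f y - k y) :=
  ContDiff.sub hf hk

lemma Sm.mul {f k : Pt → ℝ} (hf : Sm f) (hk : Sm k) : Sm (fun y => f y * k y) :=
  ContDiff.mul hf hk

lemma Sm.const (c : ℝ) : Sm (fun _ => c) := contDiff_const

lemma Sm.sum {F : Fin 2 → Pt → ℝ} (hF : ∀ a, Sm (F a)) : Sm (fun y => ∑ a, F a y) := by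
  simp only [Fin.sum_univ_two]
  exact (hF 0).add (hF 1)

lemma Sm.pd {f : Pt → ℝ} (hf : Sm f) (i : Fin 2) : Sm (pd i f) := by
  have h1 : ContDiff ℝ (⊤ : ℕ∞) (fderiv ℝ f) := ContDiff.fderiv_right hf (by simp)
  exact h1.clm_apply contDiff_const

lemma pd_add {f k : Pt → ℝ} (hf : Sm f) (hk : Sm k) (i : Fin 2) (x : Pt) :
    pd i (fun y => f y + k y) x = pd i f x + pd i k x := by
  simp only [pd]
  rw [fderiv_fun_add (hf.diff x) (hk.diff x)]; rfl

lemma pd_sub {f k : Pt → ℝ} (hf : Sm f) (hk : Sm k) (i : Fin 2) (x : Pt) :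
    pd i (fun y => f y - k y) x = pd i f x - pd i k x := by
  simp only [pd]
  rw [fderiv_fun_sub (hf.diff x) (hk.diff x)]; rfl

lemma pd_mul {f k : Pt → ℝ} (hf : Sm f) (hk : Sm k) (i : Fin 2) (x : Pt) :
    pd i (fun y => f y * k y) x = f x * pd i k x + k x * pd i f x := by
  simp only [pd]
  rw [fderiv_fun_mul (hf.diff x) (hk.diff x)]; rfl

lemma pd_const (c : ℝ) (i : Fin 2) (x : Pt) : pd i (fun _ => c) x = 0 := by
  simp [pd]

lemma pd_sum {F : Fin 2 → Pt → ℝ} (hF : ∀ a, Sm (F a)) (i : Fin 2) (x : Pt) :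
    pd i (fun y => ∑ a, F a y) x = ∑ a, pd i (F a) x := by
  simp only [Fin.sum_univ_two]
  exact pd_add (hF 0) (hF 1) i x

lemma pd_comm {f : Pt → ℝ} (hf : Sm f) (i j : Fin 2) (x : Pt) :
    pd i (pd j f) x = pd j (pd i f) x := by
  have h1 : ContDiff ℝ (⊤ : ℕ∞) (fderiv ℝ f) := ContDiff.fderiv_right hf (by simp)
  have h2 : DifferentiableAt ℝ (fderiv ℝ f) x := (h1.differentiable (by simp)) x
  have key : ∀ i j : Fin 2, pd i (pd j f) x
      = fderiv ℝ (fderiv ℝ f) x (Pi.single i 1) (Pi.single j 1) := by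
    intro i j
    have : pd j f = fun y => fderiv ℝ f y (Pi.single j 1) := rfl
    rw [this]
    simp only [pd]
    rw [fderiv_clm_apply h2 (differentiableAt_const _)]
    simp
  rw [key, key]
  have hs : IsSymmSndFDerivAt ℝ f x :=
    (ContDiff.contDiffAt hf).isSymmSndFDerivAt (by simp only [minSmoothness_of_isRCLikeNormedField]; exact WithTop.coe_le_coe.mpr le_top)
  exact hs _ _

/-- Components of the inverse metric. -/
def hinv (g : Ten2) (a b : Fin 2) (y : Pt) : ℝ := (g y)⁻¹ a b

lemma g_symm (g : Ten2) (hgpos : ∀ x, (g x).PosDef) (x : Pt) (a b : Fin 2) :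
    g x a b = g x b a := by
  have := (hgpos x).isHermitian.apply b a
  simpa using this

lemma hinv_eq (g : Ten2) (a b : Fin 2) (y : Pt) :
    hinv g a b y = (g y 0 0 * g y 1 1 - g y 0 1 * g y 1 0)⁻¹ *
      (!![g y 1 1, -g y 0 1; -g y 1 0, g y 0 0] : Matrix (Fin 2) (Fin 2) ℝ) a b := by
  simp only [hinv, Matrix.inv_def, Matrix.det_fin_two, Matrix.adjugate_fin_two,
    Ring.inverse_eq_inv', Matrix.smul_apply, smul_eq_mul]

lemma hinv_symm (g : Ten2) (hgpos : ∀ x, (g x).PosDef) (x : Pt) (a b : Fin 2) :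
    hinv g a b x = hinv g b a x := by
  have := (hgpos x).inv.isHermitian.apply b a
  simpa [hinv] using this

lemma hinv_pos (g : Ten2) (hgpos : ∀ x, (g x).PosDef) (x : Pt) : 0 < hinv g 0 0 x :=
  (hgpos x).inv.diag_pos

lemma hinv_det (g : Ten2) (hgpos : ∀ x, (g x).PosDef) (x : Pt) :
    0 < hinv g 0 0 x * hinv g 1 1 x - hinv g 0 1 x * hinv g 1 0 x := by
  have := (hgpos x).inv.det_pos
  rwa [Matrix.det_fin_two] at this

lemma hinv_mul (g : Ten2) (hgpos : ∀ x, (g x).PosDef) (x : Pt) (a b : Fin 2) :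
    ∑ e, hinv g a e x * g x e b = if a = b then 1 else 0 := by
  have h1 : (g x)⁻¹ * g x = 1 :=
    Matrix.nonsing_inv_mul _ (isUnit_iff_ne_zero.mpr (hgpos x).det_pos.ne')
  have := congrFun (congrFun h1 a) b
  rwa [Matrix.mul_apply, Matrix.one_apply] at this

lemma mul_hinv (g : Ten2) (hgpos : ∀ x, (g x).PosDef) (x : Pt) (a b : Fin 2) :
    ∑ e, g x a e * hinv g e b x = if a = b then 1 else 0 := by
  have h1 : g x * (g x)⁻¹ = 1 :=
    Matrix.mul_nonsing_inv _ (isUnit_iff_ne_zero.mpr (hgpos x).det_pos.ne')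
  have := congrFun (congrFun h1 a) b
  rwa [Matrix.mul_apply, Matrix.one_apply] at this

lemma hinv_smooth (g : Ten2) (hg : SmoothTen2 g) (hgpos : ∀ x, (g x).PosDef) (a b : Fin 2) :
    Sm (hinv g a b) := by
  have e : hinv g a b = fun y => (g y 0 0 * g y 1 1 - g y 0 1 * g y 1 0)⁻¹ *
      (!![g y 1 1, -g y 0 1; -g y 1 0, g y 0 0] : Matrix (Fin 2) (Fin 2) ℝ) a b :=
    funext fun y => hinv_eq g a b y
  rw [e]
  refine ContDiff.mul (ContDiff.inv ?_ ?_) ?_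
  · exact ((hg 0 0).mul (hg 1 1)).sub ((hg 0 1).mul (hg 1 0))
  · intro x
    have := (hgpos x).det_pos
    rw [Matrix.det_fin_two] at this
    exact this.ne'
  · fin_cases a <;> fin_cases b
    · exact hg 1 1
    · exact (hg 0 1).neg
    · exact (hg 1 0).neg
    · exact hg 0 0

lemma gam_smooth (g : Ten2) (hg : SmoothTen2 g) (hgpos : ∀ x, (g x).PosDef) (k i j : Fin 2) :
    Sm (christoffel g k i j) := by
  have h1 : ∀ l i j, Sm (pd l (fun y => g y i j)) := fun l i j => Sm.pd (hg i j) l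
  exact (Sm.const _).mul (Sm.sum fun l => (hinv_smooth g hg hgpos k l).mul
    (((h1 i l j).add (h1 j l i)).sub (h1 l i j)))

lemma gam_symm (g : Ten2) (hgpos : ∀ x, (g x).PosDef) (k i j : Fin 2) (x : Pt) :
    christoffel g k i j x = christoffel g k j i x := by
  have : ∀ l, pd l (fun y => g y i j) x = pd l (fun y => g y j i) x := by
    intro l; congr 1; funext y; exact g_symm g hgpos y i j
  simp only [christoffel, this, Fin.sum_univ_two]
  ring

lemma gam_lower (g : Ten2) (hgpos : ∀ x, (g x).PosDef) (b i j : Fin 2) (x : Pt) :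
    ∑ e, g x b e * christoffel g e i j x =
      (1 / 2) * (pd i (fun y => g y b j) x + pd j (fun y => g y b i) x
        - pd b (fun y => g y i j) x) := by
  have h := fun a => mul_hinv g hgpos x b a
  simp only [christoffel]
  have e : ∀ k l, (g x)⁻¹ k l = hinv g k l x := fun _ _ => rfl
  simp only [e, Fin.sum_univ_two] at *
  have h0 := h 0
  have h1 := h 1
  set P : Fin 2 → ℝ := fun l => pd i (fun y => g y l j) x + pd j (fun y => g y l i) x
        - pd l (fun y => g y i j) x with hP
  change g x b 0 * (1 / 2 * (hinv g 0 0 x * P 0 + hinv g 0 1 x * P 1))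
    + g x b 1 * (1 / 2 * (hinv g 1 0 x * P 0 + hinv g 1 1 x * P 1)) = 1 / 2 * P b
  have : P b = (if b = 0 then 1 else 0) * P 0 + (if b = 1 then 1 else 0) * P 1 := by
    fin_cases b <;> simp
  rw [this]
  linear_combination (1 / 2 * P 0) * h0 + (1 / 2 * P 1) * h1

lemma pd_g (g : Ten2) (hgpos : ∀ x, (g x).PosDef) (c a b : Fin 2) (x : Pt) :
    pd c (fun y => g y a b) x =
      ∑ e, g x b e * christoffel g e c a x + ∑ e, g x a e * christoffel g e c b x := by
  have s : ∀ l i j, pd l (fun y => g y i j) x = pd l (fun y => g y j i) x := by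
    intro l i j; congr 1; funext y; exact g_symm g hgpos y i j
  rw [gam_lower g hgpos, gam_lower g hgpos, s c b a, s a b c, s b c a]
  ring

lemma pd_hinv (g : Ten2) (hg : SmoothTen2 g) (hgpos : ∀ x, (g x).PosDef) (c a b : Fin 2) (x : Pt) :
    pd c (hinv g a b) x =
      - ∑ e, christoffel g a c e x * hinv g e b x - ∑ e, christoffel g b c e x * hinv g a e x := by
  have hS := hinv_smooth g hg hgpos
  have hgS : ∀ i j, Sm (fun y => g y i j) := hg
  have key : ∀ d, ∑ e, (hinv g a e x * pd c (fun y => g y e d) x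
      + g x e d * pd c (hinv g a e) x) = 0 := by
    intro d
    have h1 : pd c (fun y => ∑ e, hinv g a e y * g y e d) x = 0 := by
      have : (fun y => ∑ e, hinv g a e y * g y e d) = fun _ => if a = d then 1 else 0 :=
        funext fun y => hinv_mul g hgpos y a d
      rw [this, pd_const]
    rw [pd_sum (fun e => (hS a e).mul (hgS e d))] at h1
    rw [← h1]
    refine Finset.sum_congr rfl fun e _ => ?_
    rw [pd_mul (hS a e) (hgS e d)]
  simp only [pd_g g hgpos] at key
  have k0 := key 0
  have k1 := key 1
  have m := fun p q => mul_hinv g hgpos x p q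
  have n := fun p q => hinv_mul g hgpos x p q
  have gs := g_symm g hgpos x 1 0
  have hs := hinv_symm g hgpos x 1 0
  simp only [Fin.sum_univ_two] at *
  have m00 := m 0 0
  have m01 := m 0 1
  have m10 := m 1 0
  have m11 := m 1 1
  simp at m00 m01 m10 m11
  fin_cases a <;> fin_cases b <;> simp only [Fin.zero_eta, Fin.mk_one, Fin.isValue] at * <;>
    rw [gs] at * <;> rw [hs] at * <;> grind

lemma T_smooth (g K : Ten2) (hg : SmoothTen2 g) (hK : SmoothTen2 K)
    (hgpos : ∀ x, (g x).PosDef) (c a b : Fin 2) : Sm (covDeriv2 g K c a b) := by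
  have hΓ := gam_smooth g hg hgpos
  have hKS : ∀ i j, Sm (fun y => K y i j) := hK
  exact (((hKS a b).pd c).sub (Sm.sum fun d => (hΓ d c a).mul (hKS d b))).sub
    (Sm.sum fun d => (hΓ d c b).mul (hKS a d))

lemma pd_K (g K : Ten2) (c a b : Fin 2) (x : Pt) :
    pd c (fun y => K y a b) x = covDeriv2 g K c a b x + ∑ d, christoffel g d c a x * K x d b
      + ∑ d, christoffel g d c b x * K x a d := by
  simp only [covDeriv2]; ring

lemma pd_T (g : Ten2) (T : Fin 2 → Fin 2 → Fin 2 → Pt → ℝ) (d c a b : Fin 2) (x : Pt) :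
    pd d (T c a b) x = covDeriv3 g T d c a b x + ∑ e, christoffel g e d c x * T e a b x
    + ∑ e, christoffel g e d a x * T c e b x
    + ∑ e, christoffel g e d b x * T c a e x := by
  simp only [covDeriv3]; ring

/-- Product rule for the full contraction of two 2-tensor fields. -/
lemma pd_contract (g : Ten2) (hg : SmoothTen2 g) (hgpos : ∀ x, (g x).PosDef)
    (U V : Fin 2 → Fin 2 → Pt → ℝ) (hU : ∀ a b, Sm (U a b)) (hV : ∀ a b, Sm (V a b))
    (i : Fin 2) (x : Pt) :
    pd i (fun y => ∑ a, ∑ b, ∑ c, ∑ d, hinv g a c y * hinv g b d y * U a b y * V c d y) x =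
      ∑ a, ∑ b, ∑ c, ∑ d, hinv g a c x * hinv g b d x *
        ((pd i (U a b) x - ∑ e, christoffel g e i a x * U e b x
          - ∑ e, christoffel g e i b x * U a e x) * V c d x
        + U a b x * (pd i (V c d) x - ∑ e, christoffel g e i c x * V e d x
          - ∑ e, christoffel g e i d x * V c e x)) := by
  have hH := hinv_smooth g hg hgpos
  have s1 : ∀ a b c d, Sm (fun y => hinv g a c y * hinv g b d y * U a b y * V c d y) :=
    fun a b c d => (((hH a c).mul (hH b d)).mul (hU a b)).mul (hV c d)
  have e1 : ∀ a b c d, pd i (fun y => hinv g a c y * hinv g b d y * U a b y * V c d y) x =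
      (pd i (hinv g a c) x * hinv g b d x + hinv g a c x * pd i (hinv g b d) x) * U a b x * V c d x
      + hinv g a c x * hinv g b d x * (pd i (U a b) x * V c d x + U a b x * pd i (V c d) x) := by
    intro a b c d
    rw [pd_mul (((hH a c).mul (hH b d)).mul (hU a b)) (hV c d),
      pd_mul ((hH a c).mul (hH b d)) (hU a b), pd_mul (hH a c) (hH b d)]
    ring
  rw [pd_sum fun a => Sm.sum fun b => Sm.sum fun c => Sm.sum fun d => s1 a b c d]
  have e2 : ∀ a, pd i (fun y => ∑ b, ∑ c, ∑ d, hinv g a c y * hinv g b d y * U a b y * V c d y) x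
      = ∑ b, ∑ c, ∑ d, pd i (fun y => hinv g a c y * hinv g b d y * U a b y * V c d y) x := by
    intro a
    rw [pd_sum fun b => Sm.sum fun c => Sm.sum fun d => s1 a b c d]
    refine Finset.sum_congr rfl fun b _ => ?_
    rw [pd_sum fun c => Sm.sum fun d => s1 a b c d]
    refine Finset.sum_congr rfl fun c _ => ?_
    rw [pd_sum fun d => s1 a b c d]
  simp only [e2, e1, pd_hinv g hg hgpos]
  simp only [Fin.sum_univ_two]
  ring

lemma pd_norm (g K : Ten2) (hg : SmoothTen2 g) (hK : SmoothTen2 K)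
    (hgpos : ∀ x, (g x).PosDef) (i : Fin 2) (x : Pt) :
    pd i (normSq2 g K) x = 2 * ∑ a, ∑ b, ∑ c, ∑ d, hinv g a c x * hinv g b d x *
      covDeriv2 g K i a b x * K x c d := by
  have h := pd_contract g hg hgpos (fun a b y => K y a b) (fun a b y => K y a b) hK hK i x
  have e : normSq2 g K = fun y => ∑ a, ∑ b, ∑ c, ∑ d, hinv g a c y * hinv g b d y * K y a b
      * K y c d := rfl
  rw [e, h]
  have hs := hinv_symm g hgpos x 1 0
  have e2 : ∀ a b, pd i (fun y => K y a b) x - ∑ e, christoffel g e i a x * K x e b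
      - ∑ e, christoffel g e i b x * K x a e = covDeriv2 g K i a b x := fun _ _ => rfl
  simp only [e2]
  simp only [Fin.sum_univ_two, hs]
  ring

lemma pd_pd_norm (g K : Ten2) (hg : SmoothTen2 g) (hK : SmoothTen2 K)
    (hgpos : ∀ x, (g x).PosDef) (i j : Fin 2) (x : Pt) :
    pd i (pd j (normSq2 g K)) x - ∑ k, christoffel g k i j x * pd k (normSq2 g K) x
      = 2 * ∑ a, ∑ b, ∑ c, ∑ d, hinv g a c x * hinv g b d x *
      (covDeriv3 g (covDeriv2 g K) i j a b x * K x c d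
        + covDeriv2 g K j a b x * covDeriv2 g K i c d x) := by
  have hT := T_smooth g K hg hK hgpos
  have hKS : ∀ i j, Sm (fun y => K y i j) := hK
  have hH := hinv_smooth g hg hgpos
  have e : pd j (normSq2 g K) = fun y => 2 * ∑ a, ∑ b, ∑ c, ∑ d, hinv g a c y * hinv g b d y *
      covDeriv2 g K j a b y * K y c d := funext fun y => pd_norm g K hg hK hgpos j y
  have s1 : Sm fun y => ∑ a, ∑ b, ∑ c, ∑ d, hinv g a c y * hinv g b d y *
      covDeriv2 g K j a b y * K y c d :=
    Sm.sum fun a => Sm.sum fun b => Sm.sum fun c => Sm.sum fun d =>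
      (((hH a c).mul (hH b d)).mul (hT j a b)).mul (hKS c d)
  have h := pd_contract g hg hgpos (covDeriv2 g K j) (fun a b y => K y a b) (hT j) hK i x
  rw [e, pd_mul (Sm.const 2) s1, h, pd_const]
  have e2 : ∀ a b, pd i (fun y => K y a b) x - ∑ e, christoffel g e i a x * K x e b
      - ∑ e, christoffel g e i b x * K x a e = covDeriv2 g K i a b x := fun _ _ => rfl
  have e3 : ∀ a b, pd i (covDeriv2 g K j a b) x
      - ∑ e, christoffel g e i a x * covDeriv2 g K j e b x
      - ∑ e, christoffel g e i b x * covDeriv2 g K j a e x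
      = covDeriv3 g (covDeriv2 g K) i j a b x
        + ∑ e, christoffel g e i j x * covDeriv2 g K e a b x := by
    intro a b; simp only [covDeriv3]; ring
  simp only [e2, e3, pd_norm g K hg hK hgpos]
  simp only [Fin.sum_univ_two]
  ring

lemma T_symm (g K : Ten2) (hKsymm : ∀ x a b, K x a b = K x b a) (c a b : Fin 2) (x : Pt) :
    covDeriv2 g K c a b x = covDeriv2 g K c b a x := by
  have e : (fun y => K y a b) = fun y => K y b a := funext fun y => hKsymm y a b
  simp only [covDeriv2, e, fun d => hKsymm x d b, fun d => hKsymm x a d]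
  ring

lemma T_trace (g K : Ten2) (hg : SmoothTen2 g) (hK : SmoothTen2 K)
    (hgpos : ∀ x, (g x).PosDef)
    (htrace : ∀ x, ∑ a, ∑ b, hinv g a b x * K x a b = 0) (c : Fin 2) (x : Pt) :
    ∑ a, ∑ b, hinv g a b x * covDeriv2 g K c a b x = 0 := by
  have hH := hinv_smooth g hg hgpos
  have hKS : ∀ i j, Sm (fun y => K y i j) := hK
  have h1 : pd c (fun y => ∑ a, ∑ b, hinv g a b y * K y a b) x = 0 := by
    rw [show (fun y => ∑ a, ∑ b, hinv g a b y * K y a b) = fun _ => 0 from funext htrace, pd_const]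
  rw [pd_sum fun a => Sm.sum fun b => (hH a b).mul (hKS a b)] at h1
  rw [← h1]
  have e : ∀ a, pd c (fun y => ∑ b, hinv g a b y * K y a b) x =
      ∑ b, (hinv g a b x * pd c (fun y => K y a b) x + K x a b * pd c (hinv g a b) x) := by
    intro a
    rw [pd_sum fun b => (hH a b).mul (hKS a b)]
    exact Finset.sum_congr rfl fun b _ => pd_mul (hH a b) (hKS a b) c x
  simp only [e, pd_K g K, pd_hinv g hg hgpos]
  simp only [Fin.sum_univ_two]
  ring

lemma T_codazzi (g K : Ten2) (hg : SmoothTen2 g) (hK : SmoothTen2 K)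
    (hgpos : ∀ x, (g x).PosDef) (hKsymm : ∀ x a b, K x a b = K x b a)
    (htrace : ∀ x, ∑ a, ∑ b, hinv g a b x * K x a b = 0)
    (hdiv : ∀ x b, ∑ c, ∑ a, hinv g c a x * covDeriv2 g K c a b x = 0)
    (a b c : Fin 2) (x : Pt) :
    covDeriv2 g K a b c x = covDeriv2 g K b a c x := by
  have t := fun c => T_trace g K hg hK hgpos htrace c x
  have d := hdiv x
  have t0 := t 0
  have t1 := t 1
  have d0 := d 0
  have d1 := d 1
  have hs := hinv_symm g hgpos x 1 0
  have hd := (hinv_det g hgpos x).ne'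
  have s0 := T_symm g K hKsymm 0 1 0 x
  have s1 := T_symm g K hKsymm 1 1 0 x
  simp only [Fin.sum_univ_two, hs, s0, s1] at t0 t1 d0 d1 hd
  have D0 : covDeriv2 g K 0 1 0 x = covDeriv2 g K 1 0 0 x := by
    apply mul_left_cancel₀ hd
    rw [s0]
    linear_combination (hinv g 1 1 x) * (d1 - t1) * (1) - (hinv g 0 1 x) * (t0 - d0)
  have D1 : covDeriv2 g K 0 1 1 x = covDeriv2 g K 1 0 1 x := by
    apply mul_left_cancel₀ hd
    linear_combination (hinv g 0 0 x) * (t0 - d0) - (hinv g 0 1 x) * (d1 - t1)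
  fin_cases a <;> fin_cases b <;> fin_cases c <;> first | rfl | exact D0 | exact D1 | exact D0.symm | exact D1.symm

lemma ricci_identity (g K : Ten2) (hg : SmoothTen2 g) (hK : SmoothTen2 K)
    (hgpos : ∀ x, (g x).PosDef) (j a i b : Fin 2) (x : Pt) :
    covDeriv3 g (covDeriv2 g K) j a i b x - covDeriv3 g (covDeriv2 g K) a j i b x
      = - ∑ e, riemUp g e i j a x * K x e b - ∑ e, riemUp g e b j a x * K x i e := by
  have hΓ := gam_smooth g hg hgpos
  have hKS : ∀ i j, Sm (fun y => K y i j) := hK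
  have e : ∀ j a, pd j (covDeriv2 g K a i b) x = pd j (pd a (fun y => K y i b)) x
      - ∑ d, (christoffel g d a i x * pd j (fun y => K y d b) x
          + K x d b * pd j (christoffel g d a i) x)
      - ∑ d, (christoffel g d a b x * pd j (fun y => K y i d) x
          + K x i d * pd j (christoffel g d a b) x) := by
    intro j a
    have e0 : covDeriv2 g K a i b = fun y => pd a (fun y => K y i b) y
      - ∑ d, christoffel g d a i y * K y d b - ∑ d, christoffel g d a b y * K y i d := rfl
    have s1 : Sm fun y => ∑ d, christoffel g d a i y * K y d b :=
      Sm.sum fun d => (hΓ d a i).mul (hKS d b)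
    have s2 : Sm fun y => ∑ d, christoffel g d a b y * K y i d :=
      Sm.sum fun d => (hΓ d a b).mul (hKS i d)
    rw [e0, pd_sub (((hKS i b).pd a).sub s1) s2, pd_sub ((hKS i b).pd a) s1,
      pd_sum fun d => (hΓ d a i).mul (hKS d b), pd_sum fun d => (hΓ d a b).mul (hKS i d)]
    congr 1
    · congr 1
      exact Finset.sum_congr rfl fun d _ => pd_mul (hΓ d a i) (hKS d b) j x
    · exact Finset.sum_congr rfl fun d _ => pd_mul (hΓ d a b) (hKS i d) j x
  have e5 : ∀ (p q r s : Fin 2), pd p (fun y => christoffel g q r s y) x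
    = pd p (christoffel g q r s) x := fun _ _ _ _ => rfl
  have gs := fun k => gam_symm g hgpos k a j x
  simp only [covDeriv3, e, pd_comm (hKS i b) a j, riemUp, e5, pd_K g K, gs, Fin.sum_univ_two]
  ring

lemma riem_antisymm (g : Ten2) (hg : SmoothTen2 g)
    (hgpos : ∀ x, (g x).PosDef) (c d a b : Fin 2) (x : Pt) :
    ∑ e, g x b e * riemUp g e a c d x + ∑ e, g x a e * riemUp g e b c d x = 0 := by
  have hΓ := gam_smooth g hg hgpos
  have hgS : ∀ i j, Sm (fun y => g y i j) := hg
  have e : ∀ c d, pd c (pd d (fun y => g y a b)) x =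
      ∑ e, (g x b e * pd c (christoffel g e d a) x
          + christoffel g e d a x * pd c (fun y => g y b e) x)
      + ∑ e, (g x a e * pd c (christoffel g e d b) x
          + christoffel g e d b x * pd c (fun y => g y a e) x) := by
    intro c d
    have e0 : pd d (fun y => g y a b) = fun y => ∑ e, g y b e * christoffel g e d a y
        + ∑ e, g y a e * christoffel g e d b y := funext fun y => pd_g g hgpos d a b y
    have s1 : Sm fun y => ∑ e, g y b e * christoffel g e d a y :=
      Sm.sum fun e => (hgS b e).mul (hΓ e d a)
    have s2 : Sm fun y => ∑ e, g y a e * christoffel g e d b y :=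
      Sm.sum fun e => (hgS a e).mul (hΓ e d b)
    rw [e0, pd_add s1 s2, pd_sum fun e => (hgS b e).mul (hΓ e d a),
      pd_sum fun e => (hgS a e).mul (hΓ e d b)]
    congr 1
    · exact Finset.sum_congr rfl fun e _ => pd_mul (hgS b e) (hΓ e d a) c x
    · exact Finset.sum_congr rfl fun e _ => pd_mul (hgS a e) (hΓ e d b) c x
  have h := pd_comm (hgS a b) c d x
  rw [e, e] at h
  have e5 : ∀ (p q r s : Fin 2), pd p (fun y => christoffel g q r s y) x
    = pd p (christoffel g q r s) x := fun _ _ _ _ => rfl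
  have gs := g_symm g hgpos x
  simp only [riemUp, e5]
  simp only [pd_g g hgpos] at h
  simp only [Fin.sum_univ_two, gs 1 0] at h ⊢
  linear_combination h

lemma S_symm (g K : Ten2) (hg : SmoothTen2 g) (hK : SmoothTen2 K)
    (hgpos : ∀ x, (g x).PosDef) (hKsymm : ∀ x a b, K x a b = K x b a)
    (htrace : ∀ x, ∑ a, ∑ b, hinv g a b x * K x a b = 0)
    (hdiv : ∀ x b, ∑ c, ∑ a, hinv g c a x * covDeriv2 g K c a b x = 0)
    (j a b c : Fin 2) (x : Pt) :
    covDeriv3 g (covDeriv2 g K) j a b c x = covDeriv3 g (covDeriv2 g K) j b a c x := by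
  have C := T_codazzi g K hg hK hgpos hKsymm htrace hdiv
  have e : covDeriv2 g K a b c = covDeriv2 g K b a c := funext fun y => C a b c y
  simp only [covDeriv3, e, fun e => C e b c x, fun e => C a e c x, fun e => C a b e x]
  ring

lemma S_div (g K : Ten2) (hg : SmoothTen2 g) (hK : SmoothTen2 K)
    (hgpos : ∀ x, (g x).PosDef)
    (hdiv : ∀ x b, ∑ c, ∑ a, hinv g c a x * covDeriv2 g K c a b x = 0)
    (j b : Fin 2) (x : Pt) :
    ∑ c, ∑ a, hinv g c a x * covDeriv3 g (covDeriv2 g K) j c a b x = 0 := by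
  have hH := hinv_smooth g hg hgpos
  have hT := T_smooth g K hg hK hgpos
  have h1 : pd j (fun y => ∑ c, ∑ a, hinv g c a y * covDeriv2 g K c a b y) x = 0 := by
    rw [show (fun y => ∑ c, ∑ a, hinv g c a y * covDeriv2 g K c a b y) = fun _ => 0 from
      funext fun y => hdiv y b, pd_const]
  rw [pd_sum fun c => Sm.sum fun a => (hH c a).mul (hT c a b)] at h1
  have e : ∀ c, pd j (fun y => ∑ a, hinv g c a y * covDeriv2 g K c a b y) x =
      ∑ a, (hinv g c a x * pd j (covDeriv2 g K c a b) x
        + covDeriv2 g K c a b x * pd j (hinv g c a) x) := by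
    intro c
    rw [pd_sum fun a => (hH c a).mul (hT c a b)]
    exact Finset.sum_congr rfl fun a _ => pd_mul (hH c a) (hT c a b) j x
  have d0 := hdiv x 0
  have d1 := hdiv x 1
  simp only [e, pd_T g (covDeriv2 g K), pd_hinv g hg hgpos] at h1
  simp only [Fin.sum_univ_two] at h1 d0 d1 ⊢
  linear_combination h1 - christoffel g 0 j b x * d0 - christoffel g 1 j b x * d1

/-- The rough Laplacian of `K` in terms of curvature. -/
lemma rough_lap (g K : Ten2) (hg : SmoothTen2 g) (hK : SmoothTen2 K)
    (hgpos : ∀ x, (g x).PosDef) (hKsymm : ∀ x a b, K x a b = K x b a)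
    (htrace : ∀ x, ∑ a, ∑ b, hinv g a b x * K x a b = 0)
    (hdiv : ∀ x b, ∑ c, ∑ a, hinv g c a x * covDeriv2 g K c a b x = 0)
    (a b : Fin 2) (x : Pt) :
    ∑ i, ∑ j, hinv g i j x * covDeriv3 g (covDeriv2 g K) i j a b x =
      ∑ i, ∑ j, hinv g i j x *
        (- ∑ e, riemUp g e j i a x * K x e b - ∑ e, riemUp g e b i a x * K x j e) := by
  have h := S_div g K hg hK hgpos hdiv a b x
  rw [← sub_zero (∑ i, ∑ j, hinv g i j x * covDeriv3 g (covDeriv2 g K) i j a b x), ← h]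
  simp only [← ricci_identity g K hg hK hgpos,
    S_symm g K hg hK hgpos hKsymm htrace hdiv _ _ a b x, ← Finset.sum_sub_distrib, mul_sub]

lemma riem_form (g : Ten2) (hg : SmoothTen2 g)
    (hgpos : ∀ x, (g x).PosDef) (x : Pt) :
    ∃ κ : ℝ, riemUp g 0 0 0 1 x = - hinv g 0 1 x * κ ∧ riemUp g 0 1 0 1 x = hinv g 0 0 x * κ
      ∧ riemUp g 1 0 0 1 x = - hinv g 1 1 x * κ ∧ riemUp g 1 1 0 1 x = hinv g 0 1 x * κ := by
  have A := riem_antisymm g hg hgpos 0 1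
  have a00 := A 0 0 x
  have a01 := A 0 1 x
  have a11 := A 1 1 x
  have n := hinv_mul g hgpos x
  have n00 := n 0 0
  have n01 := n 0 1
  have n10 := n 1 0
  have n11 := n 1 1
  have hs := hinv_symm g hgpos x 1 0
  simp only [Fin.sum_univ_two, hs] at a00 a01 a11 n00 n01 n10 n11
  simp at n00 n01 n10 n11
  refine ⟨g x 0 0 * riemUp g 0 1 0 1 x + g x 0 1 * riemUp g 1 1 0 1 x, ?_, ?_, ?_, ?_⟩ <;> grind

lemma riemUp_swap (g : Ten2) (a b c d : Fin 2) (x : Pt) :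
    riemUp g a b c d x = - riemUp g a b d c x := by
  simp only [riemUp]; ring

lemma final_alg (g K : Ten2) (hg : SmoothTen2 g)
    (hgpos : ∀ x, (g x).PosDef) (hKsymm : ∀ x a b, K x a b = K x b a)
    (htrace : ∀ x, ∑ a, ∑ b, hinv g a b x * K x a b = 0) (a b : Fin 2) (x : Pt) :
    ∑ i, ∑ j, hinv g i j x *
        (- ∑ e, riemUp g e j i a x * K x e b - ∑ e, riemUp g e b i a x * K x j e)
      = scal g x * K x a b := by
  obtain ⟨κ, r0, r1, r2, r3⟩ := riem_form g hg hgpos x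
  have z0 : ∀ a b, riemUp g a b 0 0 x = 0 := fun a b => by
    have := riemUp_swap g a b 0 0 x; linarith
  have z1 : ∀ a b, riemUp g a b 1 1 x = 0 := fun a b => by
    have := riemUp_swap g a b 1 1 x; linarith
  have sw := fun a b => riemUp_swap g a b 1 0 x
  have hs := hinv_symm g hgpos x 1 0
  have ks := hKsymm x 1 0
  have t := htrace x
  have hp := (hinv_pos g hgpos x).ne'
  have e : scal g x = ∑ b, ∑ d, hinv g b d x * ∑ a, riemUp g a b a d x := rfl
  rw [e]
  simp only [Fin.sum_univ_two, hs, ks] at t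
  have k0 : K x 0 0 = -(2 * hinv g 0 1 x * K x 0 1 + hinv g 1 1 x * K x 1 1) / hinv g 0 0 x := by
    field_simp
    linear_combination t
  fin_cases a <;> fin_cases b <;>
    simp only [Fin.zero_eta, Fin.mk_one, Fin.isValue, Fin.sum_univ_two, z0, z1, sw, r0, r1, r2, r3,
      hs, ks, k0] <;> field_simp <;> ring

/-- the Calabi–Simons identity (1/2)Δ|K|_g² = |∇K|_g² + R|K|_g² for a
transverse traceless symmetric 2-tensor `K` on a 2-dimensional Riemannian manifold. -/
theorem calabi_simons_identity (g K : Ten2)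
    (hg : SmoothTen2 g) (hK : SmoothTen2 K)
    (hgpos : ∀ x, (g x).PosDef)
    (hKsymm : ∀ x a b, K x a b = K x b a)
    (htrace : ∀ x, ∑ a, ∑ b, (g x)⁻¹ a b * K x a b = 0)
    (hdiv : ∀ x b, ∑ c, ∑ a, (g x)⁻¹ c a * covDeriv2 g K c a b x = 0) :
    ∀ x, (1 / 2) * lapScalar g (normSq2 g K) x
      = normSqCov g K x + scal g x * normSq2 g K x := by
  intro x
  have R : ∀ a b, ∑ i, ∑ j, hinv g i j x * covDeriv3 g (covDeriv2 g K) i j a b x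
      = scal g x * K x a b := fun a b =>
    (rough_lap g K hg hK hgpos hKsymm htrace hdiv a b x).trans
      (final_alg g K hg hgpos hKsymm htrace a b x)
  have eL : lapScalar g (normSq2 g K) x = ∑ i, ∑ j, hinv g i j x *
      (pd i (pd j (normSq2 g K)) x - ∑ k, christoffel g k i j x * pd k (normSq2 g K) x) := rfl
  have eC : normSqCov g K x = ∑ e, ∑ f, hinv g e f x * ∑ a, ∑ b, ∑ c, ∑ d,
      hinv g a c x * hinv g b d x * (covDeriv2 g K f a b x * covDeriv2 g K e c d x) := by
    have e0 : normSqCov g K x = ∑ e, ∑ f, ∑ a, ∑ b, ∑ c, ∑ d, hinv g e f x * hinv g a c x *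
      hinv g b d x * covDeriv2 g K e a b x * covDeriv2 g K f c d x := rfl
    have hs := hinv_symm g hgpos x 1 0
    rw [e0]
    simp only [Fin.sum_univ_two, hs]
    ring
  have eN : scal g x * normSq2 g K x = ∑ a, ∑ b, ∑ c, ∑ d, hinv g a c x * hinv g b d x *
      (scal g x * K x a b) * K x c d := by
    have e0 : normSq2 g K x = ∑ a, ∑ b, ∑ c, ∑ d, hinv g a c x * hinv g b d x * K x a b
      * K x c d := rfl
    rw [e0]
    simp only [Fin.sum_univ_two]
    ring
  rw [eL, eC, eN]
  simp only [pd_pd_norm g K hg hK hgpos, ← R]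
  simp only [Fin.sum_univ_two]
  ring
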